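/- Let n ∈ ℕ and d ∈ (0,n]. There exists a constant C > 0, depending only on n and d, such that for every β ∈ [1,∞), every λ ∈ (0,∞) and every nonnegative Borel measurable function ω on ℝⁿ×(0,∞), one has H^d({x ∈ ℝⁿ : N_βω(x) > λ}) ≤ C β^d H^d({x ∈ ℝⁿ : Nω(x) > λ}), where N_βω(x) := sup{ ω(y,t) : (y,t) ∈ ℝⁿ×(0,∞), |y-x| < βt } and Nω := N_1ω. -/

import Mathlib

/-!
The level set `{N_β ω > λ}` is the union of the balls `B(y, βt)` over the points `(y, t)` with
`ω(y, t) > λ`. Fix a covering `B(x_j, r_j)` of `{Nω > λ}`; it covers every `B(y, t)`.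

If some `B(x_j, r_j)` with `r_j ≥ t` meets `B(y, t)`, then `B(y, βt) ⊆ B(x_j, 3βr_j)`. Call
`(y, t)` *small-covered* otherwise: every `B(x_j, r_j)` meeting `B(y, t)` has `r_j < t`.
For such points, since `d ≤ n`,
`t^d |B(0,1)| = t^(d-n) |B(y,t)| ≤ Σ_j r_j^(d-n) |B(x_j,r_j) ∩ B(y,t)|` (`rpow_mul_volume_le`).
The right side is at most `|B(0,1)| Σ_j r_j^d`, so the heights `t` are bounded and Vitali's lemma
yields disjoint balls `B(y_k, t_k)` such that the balls `B(y_k, 5βt_k)` cover all remaining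
`B(y, βt)`. Summing the inequality over `k` and using disjointness gives
`Σ_k t_k^d ≤ Σ_j r_j^d` (`tsum_rpow_le_of_disjoint`). Hence `C = 3^d + 5^d` works.
-/

open MeasureTheory ENNReal NNReal Set

noncomputable section

abbrev En (n : ℕ) := EuclideanSpace ℝ (Fin n)

/-- The `d`-dimensional Hausdorff capacity on `ℝⁿ`: the infimum of `Σ_j r_j^d` over all
countable coverings of `E` by open balls `B(x_j, r_j)`. -/
def hausdorffCapacity (n : ℕ) (d : ℝ) (E : Set (En n)) : ℝ≥0∞ :=
  ⨅ (c : ℕ → En n × ℝ≥0) (_ : E ⊆ ⋃ i, Metric.ball (c i).1 ((c i).2 : ℝ)),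
    ∑' i, ((c i).2 : ℝ≥0∞) ^ d

/-- The Choquet integral of `f : ℝⁿ → [0,∞]` against the Hausdorff capacity `H^d`:
`∫₀^∞ H^d({x : f x > λ}) dλ`. -/
def choquetIntegral (n : ℕ) (d : ℝ) (f : En n → ℝ≥0∞) : ℝ≥0∞ :=
  ∫⁻ lam in Ioi (0:ℝ), hausdorffCapacity n d {x | ENNReal.ofReal lam < f x}

/-- The nontangential maximal function with aperture `β`:
`N_β ω (x) = sup { ω(y,t) : |y - x| < β t }`. -/
def ntMaximal (n : ℕ) (β : ℝ) (ω : En n → ℝ → ℝ≥0∞) (x : En n) : ℝ≥0∞ :=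
  ⨆ (y : En n) (t : ℝ) (_ : dist y x < β * t), ω y t

/-- The Hausdorff capacity is bounded through coverings indexed by any countable type; padding by
balls of radius `0` costs nothing because `d > 0`. -/
lemma hausdorffCapacity_le_tsum {n : ℕ} {d : ℝ} (hd : 0 < d) {ι : Type*} [Countable ι]
    {E : Set (En n)} (c : ι → En n × ℝ≥0)
    (hc : E ⊆ ⋃ i, Metric.ball (c i).1 ((c i).2 : ℝ)) :
    hausdorffCapacity n d E ≤ ∑' i, ((c i).2 : ℝ≥0∞) ^ d := by
  obtain ⟨e, he⟩ := exists_injective_nat ι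
  have hval : ∀ i, Function.extend e c (fun _ => (0, 0)) (e i) = c i :=
    fun i => he.extend_apply _ _ _
  refine (iInf₂_le (Function.extend e c (fun _ => (0, 0))) ?_).trans ?_
  · intro x hx
    obtain ⟨i, hi⟩ := mem_iUnion.1 (hc hx)
    exact mem_iUnion.2 ⟨e i, by rwa [hval]⟩
  · rw [← he.tsum_eq (f := fun m =>
      ((Function.extend e c (fun _ => (0, 0)) m).2 : ℝ≥0∞) ^ d)]
    · simp [hval]
    · intro m hm
      by_contra hne
      apply hm
      have : Function.extend e c (fun _ => (0, 0)) m = (0, 0) :=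
        Function.extend_apply' _ _ _ (fun ⟨i, hi⟩ => hne ⟨i, hi⟩)
      simp [this, hd]

lemma volume_ball_En {n : ℕ} (hn : 0 < n) (x : En n) (r : ℝ≥0) :
    volume (Metric.ball x (r : ℝ)) = (r : ℝ≥0∞) ^ (n : ℝ) * volume (Metric.ball (0 : En n) 1) := by
  have : Nonempty (Fin n) := ⟨⟨0, hn⟩⟩
  rw [Measure.addHaar_ball volume x r.coe_nonneg, ENNReal.rpow_natCast, ENNReal.ofReal_pow r.coe_nonneg]
  simp

/-- The weighted volume `r^(d-n) |B(x,r)|` is at most `r^d |B(0,1)|`; at `r = 0` the ball is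
empty and the left side vanishes whatever the value of the power. -/
lemma rpow_sub_mul_volume_ball_le {n : ℕ} (hn : 0 < n) (d : ℝ) (x : En n) (r : ℝ≥0) :
    (r : ℝ≥0∞) ^ (d - n) * volume (Metric.ball x (r : ℝ))
      ≤ (r : ℝ≥0∞) ^ d * volume (Metric.ball (0 : En n) 1) := by
  rcases eq_or_ne r 0 with rfl | hr
  · simp
  · rw [volume_ball_En hn, ← mul_assoc, ← ENNReal.rpow_add _ _ (by simpa using hr) (by simp),
      sub_add_cancel]

/-- If a ball of radius `t` is covered by balls of which only those with radius below `t` meet it,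
then `t^d |B(0,1)|` is bounded by the sum of the intersection volumes weighted by `r_j^(d-n)`.
This is where `d ≤ n` enters. -/
lemma rpow_mul_volume_le {n : ℕ} (hn : 0 < n) {d : ℝ} (hdn : d ≤ n) (c : ℕ → En n × ℝ≥0)
    (y : En n) (t : ℝ≥0) (ht : 0 < t)
    (hcov : Metric.ball y (t : ℝ) ⊆ ⋃ j, Metric.ball (c j).1 ((c j).2 : ℝ))
    (hsm : ∀ j, (Metric.ball (c j).1 ((c j).2 : ℝ) ∩ Metric.ball y (t : ℝ)).Nonempty →
      (c j).2 < t) :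
    (t : ℝ≥0∞) ^ d * volume (Metric.ball (0 : En n) 1) ≤
      ∑' j, ((c j).2 : ℝ≥0∞) ^ (d - n) *
        volume (Metric.ball (c j).1 ((c j).2 : ℝ) ∩ Metric.ball y (t : ℝ)) := by
  have h1 : (t : ℝ≥0∞) ^ d * volume (Metric.ball (0 : En n) 1)
      = (t : ℝ≥0∞) ^ (d - n) * volume (Metric.ball y (t : ℝ)) := by
    rw [volume_ball_En hn, ← mul_assoc, ← ENNReal.rpow_add _ _ (by simpa using ht.ne') (by simp),
      sub_add_cancel]
  have h2 : volume (Metric.ball y (t : ℝ)) ≤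
      ∑' j, volume (Metric.ball (c j).1 ((c j).2 : ℝ) ∩ Metric.ball y (t : ℝ)) := by
    refine (measure_mono ?_).trans (measure_iUnion_le _)
    rw [← iUnion_inter]
    exact subset_inter hcov subset_rfl
  rw [h1]
  refine (mul_le_mul_right h2 _).trans ?_
  rw [← ENNReal.tsum_mul_left]
  refine ENNReal.tsum_le_tsum fun j => ?_
  rcases (Metric.ball (c j).1 ((c j).2 : ℝ) ∩ Metric.ball y (t : ℝ)).eq_empty_or_nonempty
    with he | hne
  · simp [he]
  · refine mul_le_mul_left ?_ _
    have hlt : ((c j).2 : ℝ≥0∞) ≤ t := by exact_mod_cast (hsm j hne).le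
    rw [← neg_sub, ENNReal.rpow_neg, ENNReal.rpow_neg]
    exact ENNReal.inv_le_inv.2 (ENNReal.rpow_le_rpow hlt (sub_nonneg.2 hdn))

/-- Disjoint balls that are small-covered by the `B(x_j, r_j)` satisfy `Σ_k t_k^d ≤ Σ_j r_j^d`. -/
lemma tsum_rpow_le_of_disjoint {n : ℕ} (hn : 0 < n) {d : ℝ} (hdn : d ≤ n) (c : ℕ → En n × ℝ≥0)
    {ι : Type*} [Countable ι] (b : ι → En n × ℝ≥0) (hpos : ∀ k, 0 < (b k).2)
    (hdisj : Pairwise (Function.onFun Disjoint fun k => Metric.ball (b k).1 ((b k).2 : ℝ)))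
    (hcov : ∀ k, Metric.ball (b k).1 ((b k).2 : ℝ) ⊆ ⋃ j, Metric.ball (c j).1 ((c j).2 : ℝ))
    (hsm : ∀ k j, (Metric.ball (c j).1 ((c j).2 : ℝ) ∩
      Metric.ball (b k).1 ((b k).2 : ℝ)).Nonempty → (c j).2 < (b k).2) :
    ∑' k, ((b k).2 : ℝ≥0∞) ^ d ≤ ∑' j, ((c j).2 : ℝ≥0∞) ^ d := by
  have hv0 : volume (Metric.ball (0 : En n) 1) ≠ 0 :=
    (Metric.measure_ball_pos _ _ one_pos).ne'
  have hvt : volume (Metric.ball (0 : En n) 1) ≠ ∞ := measure_ball_lt_top.ne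
  rw [← ENNReal.mul_le_mul_iff_left hv0 hvt, ← ENNReal.tsum_mul_right, ← ENNReal.tsum_mul_right]
  calc ∑' k, ((b k).2 : ℝ≥0∞) ^ d * volume (Metric.ball (0 : En n) 1)
      ≤ ∑' k, ∑' j, ((c j).2 : ℝ≥0∞) ^ (d - n) *
        volume (Metric.ball (c j).1 ((c j).2 : ℝ) ∩ Metric.ball (b k).1 ((b k).2 : ℝ)) :=
        ENNReal.tsum_le_tsum fun k =>
          rpow_mul_volume_le hn hdn c _ _ (hpos k) (hcov k) (hsm k)
    _ = ∑' j, ((c j).2 : ℝ≥0∞) ^ (d - n) * ∑' k,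
        volume (Metric.ball (c j).1 ((c j).2 : ℝ) ∩ Metric.ball (b k).1 ((b k).2 : ℝ)) := by
        rw [ENNReal.tsum_comm]
        simp_rw [ENNReal.tsum_mul_left]
    _ ≤ ∑' j, ((c j).2 : ℝ≥0∞) ^ d * volume (Metric.ball (0 : En n) 1) := by
        refine ENNReal.tsum_le_tsum fun j => ?_
        refine le_trans (mul_le_mul_right ?_ _) (rpow_sub_mul_volume_ball_le hn d (c j).1 (c j).2)
        rw [← measure_iUnion]
        · exact measure_mono (iUnion_subset fun k => inter_subset_left)
        · exact fun k l hkl => (hdisj hkl).mono inter_subset_right inter_subset_right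
        · exact fun k => Metric.isOpen_ball.measurableSet.inter Metric.isOpen_ball.measurableSet

/-- The geometric core: if all balls `B(y, t)`, `(y, t) ∈ A`, are covered by the `B(x_j, r_j)`,
then the union of the dilated balls `B(y, βt)` has capacity at most
`(3^d + 5^d) β^d Σ_j r_j^d`. -/
lemma hausdorffCapacity_dilate_le {n : ℕ} (hn : 0 < n) {d : ℝ} (hd0 : 0 < d) (hdn : d ≤ n)
    (β : ℝ≥0) (hβ : 1 ≤ β) (A : Set (En n × ℝ≥0)) (c : ℕ → En n × ℝ≥0)
    (hcov : ∀ a ∈ A, Metric.ball a.1 (a.2 : ℝ) ⊆ ⋃ j, Metric.ball (c j).1 ((c j).2 : ℝ)) :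
    hausdorffCapacity n d (⋃ a ∈ A, Metric.ball a.1 ((β * a.2 : ℝ≥0) : ℝ)) ≤
      (3 ^ d + 5 ^ d) * (β : ℝ≥0∞) ^ d * ∑' j, ((c j).2 : ℝ≥0∞) ^ d := by
  have hβ' : (1 : ℝ) ≤ β := by exact_mod_cast hβ
  rcases eq_or_ne (∑' j, ((c j).2 : ℝ≥0∞) ^ d) ∞ with htop | hfin
  · have h0 : ((3 : ℝ≥0∞) ^ d + 5 ^ d) * (β : ℝ≥0∞) ^ d ≠ 0 := by
      have hβ0 : (β : ℝ≥0∞) ≠ 0 := by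
        have : β ≠ 0 := (zero_lt_one.trans_le hβ).ne'
        exact_mod_cast this
      refine mul_ne_zero ?_ ?_
      · have : (0 : ℝ≥0∞) < 3 ^ d := ENNReal.rpow_pos (by norm_num) (by norm_num)
        exact (this.trans_le le_self_add).ne'
      · exact (ENNReal.rpow_pos (pos_iff_ne_zero.2 hβ0) (by simp)).ne'
    rw [htop, ENNReal.mul_top h0]
    exact le_top
  -- The small-covered points of `A`.
  set T : Set (En n × ℝ≥0) := {a | a ∈ A ∧ 0 < a.2 ∧
    ∀ j, (Metric.ball (c j).1 ((c j).2 : ℝ) ∩ Metric.ball a.1 (a.2 : ℝ)).Nonempty →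
      (c j).2 < a.2} with hT
  have hbound : ∀ a ∈ T, (a.2 : ℝ) ≤ ((∑' j, ((c j).2 : ℝ≥0∞) ^ d) ^ d⁻¹).toReal := by
    intro a ha
    have h := tsum_rpow_le_of_disjoint hn hdn c (fun _ : Unit => a) (fun _ => ha.2.1)
      (fun k l hkl => (hkl rfl).elim) (fun _ => hcov a ha.1) (fun _ => ha.2.2)
    simp only [tsum_fintype, Finset.univ_unique, Finset.sum_singleton] at h
    have h' : (a.2 : ℝ≥0∞) ≤ (∑' j, ((c j).2 : ℝ≥0∞) ^ d) ^ d⁻¹ :=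
      (ENNReal.le_rpow_inv_iff hd0).2 h
    have := ENNReal.toReal_mono (ENNReal.rpow_ne_top_of_nonneg (inv_nonneg.2 hd0.le) hfin) h'
    simpa using this
  obtain ⟨u, huT, hudisj, hucov⟩ := Vitali.exists_disjoint_subfamily_covering_enlargement
    (fun a : En n × ℝ≥0 => Metric.ball a.1 (a.2 : ℝ)) T (fun a => (a.2 : ℝ)) 2 one_lt_two
    (fun a _ => a.2.2) _ hbound
    (fun a ha => Metric.nonempty_ball.2 (by exact_mod_cast ha.2.1))
  have hucount : u.Countable := hudisj.countable_of_isOpen (fun _ _ => Metric.isOpen_ball)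
    (fun a ha => Metric.nonempty_ball.2 (by exact_mod_cast (huT ha).2.1))
  have : Countable u := hucount.to_subtype
  have hsum : ∑' k : u, (k.1.2 : ℝ≥0∞) ^ d ≤ ∑' j, ((c j).2 : ℝ≥0∞) ^ d :=
    tsum_rpow_le_of_disjoint hn hdn c (fun k : u => k.1) (fun k => (huT k.2).2.1)
      (fun k l hkl => hudisj k.2 l.2 (fun h => hkl (Subtype.ext h)))
      (fun k => hcov _ (huT k.2).1) (fun k => (huT k.2).2.2)
  refine (hausdorffCapacity_le_tsum hd0 (ι := ℕ ⊕ u)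
    (Sum.elim (fun j => ((c j).1, 3 * β * (c j).2)) (fun k => (k.1.1, 5 * β * k.1.2))) ?_).trans ?_
  · intro x hx
    obtain ⟨a, haA, hxa⟩ := mem_iUnion₂.1 hx
    rw [Metric.mem_ball, NNReal.coe_mul] at hxa
    have hapos : (0 : ℝ) < a.2 :=
      pos_of_mul_pos_right (dist_nonneg.trans_lt hxa) β.2
    by_cases haT : a ∈ T
    · obtain ⟨b, hbu, ⟨z, hza, hzb⟩, hab⟩ := hucov a haT
      refine mem_iUnion.2 ⟨Sum.inr ⟨b, hbu⟩, ?_⟩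
      rw [Metric.mem_ball] at hza hzb
      have h1 := dist_triangle x a.1 b.1
      have h2 := dist_triangle a.1 z b.1
      rw [dist_comm a.1 z] at h2
      simp only [Sum.elim_inr, Metric.mem_ball, NNReal.coe_mul, NNReal.coe_ofNat]
      have hb0 : (0 : ℝ) ≤ b.2 := b.2.2
      nlinarith [mul_le_mul_of_nonneg_left hab β.2, mul_le_mul_of_nonneg_right hβ' hb0]
    · have : ∃ j, (Metric.ball (c j).1 ((c j).2 : ℝ) ∩ Metric.ball a.1 (a.2 : ℝ)).Nonempty ∧
          a.2 ≤ (c j).2 := by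
        by_contra hcon
        push Not at hcon
        exact haT ⟨haA, by exact_mod_cast hapos, hcon⟩
      obtain ⟨j, ⟨z, hzc, hza⟩, hac⟩ := this
      have hac' : (a.2 : ℝ) ≤ (c j).2 := by exact_mod_cast hac
      refine mem_iUnion.2 ⟨Sum.inl j, ?_⟩
      rw [Metric.mem_ball] at hza hzc
      have h1 := dist_triangle x a.1 (c j).1
      have h2 := dist_triangle a.1 z (c j).1
      rw [dist_comm a.1 z] at h2
      simp only [Sum.elim_inl, Metric.mem_ball, NNReal.coe_mul, NNReal.coe_ofNat]
      have hb0 : (0 : ℝ) ≤ (c j).2 := (c j).2.2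
      nlinarith [mul_le_mul_of_nonneg_left hac' β.2, mul_le_mul_of_nonneg_right hβ' hb0]
  · rw [Summable.tsum_sum ENNReal.summable ENNReal.summable]
    simp only [Sum.elim_inl, Sum.elim_inr, ENNReal.coe_mul, ENNReal.coe_ofNat,
      ENNReal.mul_rpow_of_nonneg _ _ hd0.le, ENNReal.tsum_mul_left]
    calc _ ≤ 3 ^ d * (β : ℝ≥0∞) ^ d * ∑' j, ((c j).2 : ℝ≥0∞) ^ d
          + 5 ^ d * (β : ℝ≥0∞) ^ d * ∑' j, ((c j).2 : ℝ≥0∞) ^ d := by gcongr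
      _ = _ := by ring

/-- Level sets of the nontangential maximal function are unions of balls. Points with `t < 0` do
not contribute, so `t` may be taken in `ℝ≥0`. -/
lemma setOf_lt_ntMaximal (n : ℕ) (β : ℝ≥0) (ω : En n → ℝ → ℝ≥0∞) (l : ℝ≥0∞) :
    {x | l < ntMaximal n β ω x} =
      ⋃ a ∈ {a : En n × ℝ≥0 | l < ω a.1 a.2}, Metric.ball a.1 ((β * a.2 : ℝ≥0) : ℝ) := by
  ext x
  simp only [ntMaximal, mem_ofPred_eq, lt_iSup_iff, mem_iUnion, Metric.mem_ball, NNReal.coe_mul,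
    exists_prop, Prod.exists]
  constructor
  · rintro ⟨y, t, ht, hl⟩
    have ht0 : 0 < t := pos_of_mul_pos_right (dist_nonneg.trans_lt ht) β.2
    exact ⟨y, ⟨t, ht0.le⟩, hl, by rwa [dist_comm]⟩
  · rintro ⟨y, t, hl, ht⟩
    exact ⟨y, t, by rwa [dist_comm], hl⟩

theorem stmt4 (n : ℕ) (hn : 0 < n) (d : ℝ) (hd0 : 0 < d) (hdn : d ≤ n) :
    ∃ C : ℝ≥0∞, 0 < C ∧ C < ∞ ∧
      ∀ (β : ℝ), 1 ≤ β → ∀ (lam : ℝ), 0 < lam →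
        ∀ ω : En n → ℝ → ℝ≥0∞, Measurable (Function.uncurry ω) →
          hausdorffCapacity n d {x | ENNReal.ofReal lam < ntMaximal n β ω x}
            ≤ C * ENNReal.ofReal β ^ d *
              hausdorffCapacity n d {x | ENNReal.ofReal lam < ntMaximal n 1 ω x} := by
  have h3 : (0 : ℝ≥0∞) < 3 ^ d := ENNReal.rpow_pos (by norm_num) (by norm_num)
  have hC0 : (0 : ℝ≥0∞) < 3 ^ d + 5 ^ d := h3.trans_le le_self_add
  have hCt : (3 : ℝ≥0∞) ^ d + 5 ^ d < ∞ :=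
    ENNReal.add_lt_top.2 ⟨ENNReal.rpow_lt_top_of_nonneg hd0.le (by norm_num),
      ENNReal.rpow_lt_top_of_nonneg hd0.le (by norm_num)⟩
  refine ⟨3 ^ d + 5 ^ d, hC0, hCt, fun β hβ lam _ ω _ => ?_⟩
  lift β to ℝ≥0 using zero_le_one.trans hβ
  have hβ1 : 1 ≤ β := by exact_mod_cast hβ
  rw [ENNReal.ofReal_coe_nnreal]
  have hβ0 : (0 : ℝ≥0∞) < (β : ℝ≥0∞) ^ d :=
    ENNReal.rpow_pos (by exact_mod_cast zero_lt_one.trans_le hβ1) (by simp)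
  have hβt : (β : ℝ≥0∞) ^ d < ∞ := ENNReal.rpow_lt_top_of_nonneg hd0.le (by simp)
  conv_rhs => unfold hausdorffCapacity
  have hK0 := (mul_pos hC0.ne' hβ0.ne').ne'
  have hKt := (ENNReal.mul_lt_top hCt hβt).ne
  rw [ENNReal.mul_iInf_of_ne hK0 hKt]
  refine le_iInf fun c => ?_
  rw [ENNReal.mul_iInf_of_ne hK0 hKt]
  refine le_iInf fun hc => ?_
  rw [setOf_lt_ntMaximal]
  refine hausdorffCapacity_dilate_le hn hd0 hdn β hβ1 _ c fun a ha => ?_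
  have h1 := setOf_lt_ntMaximal n 1 ω (ENNReal.ofReal lam)
  rw [NNReal.coe_one] at h1
  rw [h1] at hc
  refine Subset.trans ?_ hc
  intro x hx
  exact mem_iUnion₂.2 ⟨a, ha, by simpa using hx⟩
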